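/- Lerch's formula (Lerch, 1897, typical of Lerch's number-theoretic work): for the digamma function ψ, one has ∫₀¹ ψ(x) dx = −γ in the improper sense, equivalently ∫₀¹ log Γ(x) dx = log √(2π) (Raabe's formula at a = 0). -/

import Mathlib

open Real

/-! Take logarithms in Euler's reflection formula `Γ(x) Γ(1 - x) = π / sin (π x)` and integrate over
`(0, 1)`. Both terms on the left contribute `∫₀¹ log Γ`, because `x ↦ 1 - x` preserves the
interval, and the right side reduces to the classical integral of `log sin`. The logarithmic
singularities are integrable because `Γ`, the inverse of an entire function, is meromorphic. -/

open MeasureTheory (volume)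

theorem meromorphic_real_Gamma : Meromorphic Real.Gamma := fun x ↦ by
  have analyticAt_inv : AnalyticAt ℝ (fun y : ℝ ↦ ((Complex.Gamma y)⁻¹).re) x :=
    (Complex.differentiable_one_div_Gamma.analyticAt x).re_ofReal
  have inv_eq : (fun y : ℝ ↦ ((Complex.Gamma y)⁻¹).re) = Real.Gamma⁻¹ := by
    ext y
    rw [Complex.Gamma_ofReal, ← Complex.ofReal_inv, Complex.ofReal_re, Pi.inv_apply]
  rw [inv_eq] at analyticAt_inv
  exact MeromorphicAt.inv_iff.mp analyticAt_inv.meromorphicAt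

theorem intervalIntegrable_log_Gamma (a b : ℝ) :
    IntervalIntegrable (fun x ↦ log (Real.Gamma x)) volume a b :=
  meromorphic_real_Gamma.meromorphicOn.intervalIntegrable_log

theorem log_Gamma_add_log_Gamma_one_sub {x : ℝ} (hx : sin (π * x) ≠ 0) :
    log (Real.Gamma x) + log (Real.Gamma (1 - x)) = log π - log (sin (π * x)) := by
  have reflection := Real.Gamma_mul_Gamma_one_sub x
  have product_ne_zero : Real.Gamma x * Real.Gamma (1 - x) ≠ 0 :=
    reflection ▸ div_ne_zero pi_ne_zero hx
  rw [← log_mul (left_ne_zero_of_mul product_ne_zero) (right_ne_zero_of_mul product_ne_zero),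
    reflection, log_div pi_ne_zero hx]

theorem intervalIntegrable_log_sin_mul (c a b : ℝ) :
    IntervalIntegrable (fun x ↦ log (sin (c * x))) volume a b := by
  have analyticOnNhd_sin_mul : AnalyticOnNhd ℝ (fun x ↦ sin (c * x)) (Set.uIcc a b) :=
    fun x _ ↦ by fun_prop
  exact analyticOnNhd_sin_mul.meromorphicOn.intervalIntegrable_log

theorem integral_log_sin_mul {c : ℝ} (hc : c ≠ 0) :
    ∫ x in 0..π / c, log (sin (c * x)) = -log 2 * (π / c) := by
  rw [intervalIntegral.integral_comp_mul_left (fun x ↦ log (sin x)) hc, mul_zero,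
    mul_div_cancel₀ π hc, integral_log_sin_zero_pi, smul_eq_mul]
  ring

theorem integral_add_comp_reflection {E : Type*} [NormedAddCommGroup E] [NormedSpace ℝ E]
    {f : ℝ → E} {a b : ℝ} (hf : IntervalIntegrable f volume a b) :
    ∫ x in a..b, (f x + f (a + b - x)) = (2 : ℝ) • ∫ x in a..b, f x := by
  have hf_reflected : IntervalIntegrable (fun x ↦ f (a + b - x)) volume a b := by
    simpa using (hf.comp_sub_left (a + b)).symm
  rw [intervalIntegral.integral_add hf hf_reflected, intervalIntegral.integral_comp_sub_left,
    add_sub_cancel_right, add_sub_cancel_left, two_smul]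

/-- Raabe/Lerch integral: `∫₀¹ log Γ(x) dx = (1/2)·log (2π)`. -/
theorem raabe_lerch : (∫ x in (0:ℝ)..1, Real.log (Real.Gamma x)) = (1 / 2) * Real.log (2 * π) := by
  have integral_log_sin_pi_mul : ∫ x in (0:ℝ)..1, log (sin (π * x)) = -log 2 := by
    simpa using integral_log_sin_mul pi_ne_zero
  have two_mul_integral :=
    calc 2 * ∫ x in (0:ℝ)..1, log (Real.Gamma x)
      _ = ∫ x in (0:ℝ)..1, (log (Real.Gamma x) + log (Real.Gamma (1 - x))) := by
        simpa using (integral_add_comp_reflection (intervalIntegrable_log_Gamma 0 1)).symm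
      _ = ∫ x in (0:ℝ)..1, (log π - log (sin (π * x))) := by
        refine intervalIntegral.integral_congr_Ioo_of_le zero_le_one fun x hx ↦ ?_
        have sin_pos : 0 < sin (π * x) := sin_pos_of_pos_of_lt_pi
          (mul_pos pi_pos hx.1) (mul_lt_of_lt_one_right pi_pos hx.2)
        exact log_Gamma_add_log_Gamma_one_sub sin_pos.ne'
      _ = log π + log 2 := by
        rw [intervalIntegral.integral_sub intervalIntegrable_const
          (intervalIntegrable_log_sin_mul π 0 1), integral_log_sin_pi_mul]
        simp
      _ = log (2 * π) := by rw [log_mul two_ne_zero pi_ne_zero, add_comm]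
  linarith
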